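/- For every sequence t_1, t_2, ... of rationals, the formal power series P = P(x,z;t) satisfies the functional equation P = 1 + z*P + \sum_{p\ge 1} t_p x^p P^p + z*\sum_{p\ge 1} t_p x^p P^{p+1} in \mathbb{Q}[[x,z]], where the two infinite series converge coefficientwise (for each pair (m,j), only finitely many summands contribute to the coefficient of x^m z^j). -/

import Mathlib

open Finset

inductive Step : Type
  | u | d | h
deriving DecidableEq

/-- Lengths of maximal blocks of letters with `wt s ≠ none`, weighted by `wt`. -/
def runs (wt : Step → Option ℕ) : List Step → List ℕ
  | [] => []
  | s :: l =>
    match wt s, runs wt l with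
    | none, r => r
    | some n, r =>
      match l with
      | [] => [n]
      | s' :: _ =>
        match wt s' with
        | none => n :: r
        | some _ =>
          match r with
          | a :: rest => (n + a) :: rest
          | [] => [n]

def uRuns : List Step → List ℕ :=
  runs (fun s => match s with | Step.u => some 1 | _ => none)

def uhRuns (k : ℕ) : List Step → List ℕ :=
  runs (fun s => match s with | Step.u => some 1 | Step.h => some k | Step.d => none)

def alpha (i : ℕ) (w : List Step) : ℕ := (uRuns w).count i

def beta (i : ℕ) (w : List Step) : ℕ := (uRuns w).tail.count i

def IsNonneg (w : List Step) : Prop :=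
  ∀ i : ℕ, (w.take i).count Step.d ≤ (w.take i).count Step.u

def pathSet (m j : ℕ) : Set (List Step) :=
  {w | w.count Step.u = m ∧ w.count Step.d = m ∧ w.count Step.h = j ∧ IsNonneg w}

/-- no horizontal step lies on the x-axis -/
def NoLowH (w : List Step) : Prop :=
  ∀ (i : ℕ) (hi : i < w.length), w[i]'hi = Step.h →
    (w.take i).count Step.u ≠ (w.take i).count Step.d

def qSet (m j : ℕ) : Set (List Step) :=
  {w | w ∈ pathSet m j ∧ NoLowH w}

/-- normalized partial Bell polynomial (r!/m!) B_{m,r}(1!t₁,2!t₂,…) -/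
def bellNorm (m r : ℕ) (t : ℕ → ℚ) : ℚ :=
  ∑ f : Fin m → Fin (m + 1),
    if (∑ i : Fin m, (f i : ℕ)) = r ∧ (∑ i : Fin m, ((i : ℕ) + 1) * (f i : ℕ)) = m then
      (r.factorial : ℚ) / (∏ i : Fin m, ((f i : ℕ).factorial : ℚ)) * ∏ i : Fin m, t ((i : ℕ) + 1) ^ (f i : ℕ)
    else 0

/-- normalized potential polynomial  P_p^{(lam)}(1!t₁,2!t₂,…)/p! -/
def potential (lam p : ℕ) (t : ℕ → ℚ) : ℚ :=
  ∑ r ∈ Finset.range (p + 1), (Nat.choose lam r : ℚ) * bellNorm p r t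


noncomputable def pathGF (t : ℕ → ℚ) : MvPowerSeries (Fin 2) ℚ :=
  fun d => ∑ᶠ w ∈ pathSet (d 0) (d 1), ∏ i ∈ Finset.Icc 1 (d 0), t i ^ alpha i w

/-!
Call a path from height `l` to height `0` a descent from height `l`. Cutting a descent from height
`l + k + 1` at its first down-step to height `k` yields a descent from height `l` and one from
height `k`; for generating functions, this product formula follows by induction on the coefficients
from splitting off the first letter. No `u`-segment contains a down-step, so the weights multiply
as well, and the descents from height `l` have generating function `P ^ (l + 1)`.

A nonempty path starts with exactly `p` up-steps. For `p = 0` it continues with `h`, giving `z P`;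
for `p ≥ 1` these form a segment of weight `t p`, followed either by `d` and a descent from height
`p - 1`, giving `t p x ^ p P ^ p`, or by `h` and a descent from height `p`, giving
`z t p x ^ p P ^ (p + 1)`. Having split off the values of `p` up to `m`, the remaining paths start
with `m + 1` up-steps and so do not contribute to the coefficient of `x ^ m z ^ j`.
-/

theorem finsum_mem_list_eq_nil_add_sum_cons {α M : Type*} [Fintype α] [AddCommMonoid M]
    {S : Set (List α)} (hS : S.Finite) (f : List α → M) :
    ∑ᶠ w ∈ S, f w =
      ∑ᶠ w ∈ S ∩ {[]}, f w + ∑ a, ∑ᶠ w ∈ List.cons a ⁻¹' S, f (a :: w) := by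
  have hsplit : S = S ∩ {[]} ∪ ⋃ a, List.cons a '' (List.cons a ⁻¹' S) := by
    ext (_ | ⟨a, w⟩) <;> simp
  have hfin (a : α) : (List.cons a '' (List.cons a ⁻¹' S)).Finite :=
    hS.subset (Set.image_preimage_subset _ _)
  have hdisj : Pairwise (Function.onFun Disjoint fun a => List.cons a '' (List.cons a ⁻¹' S)) := by
    intro a b hab
    rw [Function.onFun, Set.disjoint_left]
    rintro _ ⟨v, -, rfl⟩ ⟨w, -, hw⟩
    exact hab (List.cons.inj hw).1.symm
  have hnil : Disjoint (S ∩ {[]}) (⋃ a, List.cons a '' (List.cons a ⁻¹' S)) := by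
    rw [Set.disjoint_left]
    rintro _ ⟨-, rfl⟩ h
    simp at h
  conv_lhs => rw [hsplit]
  rw [finsum_mem_union hnil (hS.inter_of_left _) (Set.finite_iUnion hfin),
    finsum_mem_iUnion hdisj hfin, finsum_eq_sum_of_fintype (α := α)]
  simp_rw [finsum_mem_image List.cons_injective.injOn]

section PowerSeries

open MvPowerSeries

variable {σ R : Type*} [Semiring R]

theorem mvPowerSeries_coeff_X_mul (s : σ) (φ : MvPowerSeries σ R) (e : σ →₀ ℕ) :
    coeff e (X s * φ) = if e s = 0 then 0 else coeff (e - Finsupp.single s 1) φ := by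
  rw [X, coeff_monomial_mul, one_mul]
  simp [Finsupp.single_le_iff, Nat.one_le_iff_ne_zero, ite_not]

theorem coeff_X_mul_congr {s : σ} {φ ψ : MvPowerSeries σ R} {e : σ →₀ ℕ}
    (h : e s ≠ 0 → coeff (e - Finsupp.single s 1) φ = coeff (e - Finsupp.single s 1) ψ) :
    coeff e (X s * φ) = coeff e (X s * ψ) := by
  rw [mvPowerSeries_coeff_X_mul, mvPowerSeries_coeff_X_mul]
  split_ifs with hs
  · rfl
  · exact h hs

end PowerSeries

instance : Fintype Step where
  elems := {Step.u, Step.d, Step.h}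
  complete s := by cases s <;> simp

theorem Step.sum_univ {M : Type*} [AddCommMonoid M] (f : Step → M) :
    ∑ s, f s = f Step.u + f Step.d + f Step.h := by
  rw [show (univ : Finset Step) = {Step.u, Step.d, Step.h} from rfl,
    sum_insert (by simp), sum_insert (by simp), sum_singleton, add_assoc]

section Runs

variable {wt : Step → Option ℕ}

theorem runs_singleton {a : Step} {n : ℕ} (ha : wt a = some n) : runs wt [a] = [n] := by
  simp [runs, ha]

theorem runs_cons_cons_of_none {a b : Step} {n : ℕ} (ha : wt a = some n) (hb : wt b = none)
    (w : List Step) : runs wt (a :: b :: w) = n :: runs wt w := by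
  simp [runs, ha, hb]

theorem runs_cons_cons_of_some {a b : Step} {n k c : ℕ} {w : List Step} {r : List ℕ}
    (ha : wt a = some n) (hb : wt b = some k) (hr : runs wt (b :: w) = c :: r) :
    runs wt (a :: b :: w) = (n + c) :: r := by
  rw [runs, hr]
  simp only [ha, hb]

theorem exists_runs_cons_eq_cons {a : Step} {n : ℕ} (ha : wt a = some n) (w : List Step) :
    ∃ c r, runs wt (a :: w) = c :: r := by
  refine List.exists_cons_of_ne_nil ?_
  rw [runs, ha]
  grind

theorem runs_append_cons_of_none {s : Step} (hs : wt s = none) (v w : List Step) :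
    runs wt (v ++ s :: w) = runs wt v ++ runs wt w := by
  induction v with
  | nil => simp [runs, hs]
  | cons a v ih =>
    cases ha : wt a with
    | none => simpa [runs, ha] using ih
    | some n =>
      cases v with
      | nil => exact (runs_cons_cons_of_none ha hs w).trans (by rw [runs_singleton ha]; rfl)
      | cons b v =>
        cases hb : wt b with
        | none => simpa [runs, ha, hb] using ih
        | some k =>
          obtain ⟨c, r, hr⟩ := exists_runs_cons_eq_cons hb v
          rw [hr] at ih
          exact (runs_cons_cons_of_some ha hb ih).trans
            (by rw [runs_cons_cons_of_some ha hb hr]; rfl)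

theorem runs_cons_of_some {a : Step} {n : ℕ} (ha : wt a = some n) (w : List Step) :
    runs wt (a :: w) = n :: runs wt w ∨
      ∃ c r, runs wt w = c :: r ∧ runs wt (a :: w) = (n + c) :: r := by
  cases w with
  | nil => exact .inl (runs_singleton ha)
  | cons b w =>
    cases hb : wt b with
    | none => exact .inl (by simp [runs, ha, hb])
    | some k =>
      obtain ⟨c, r, hr⟩ := exists_runs_cons_eq_cons hb w
      exact .inr ⟨c, r, hr, runs_cons_cons_of_some ha hb hr⟩

theorem sum_runs (w : List Step) : (runs wt w).sum = (w.filterMap wt).sum := by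
  induction w with
  | nil => rfl
  | cons a w ih =>
    cases ha : wt a with
    | none => simpa [runs, ha] using ih
    | some n =>
      rw [List.filterMap_cons_some ha, List.sum_cons, ← ih]
      obtain h | ⟨c, r, hw, h⟩ := runs_cons_of_some ha w
      · rw [h, List.sum_cons]
      · rw [h, hw, List.sum_cons, List.sum_cons, add_assoc]

theorem zero_notMem_runs (hpos : ∀ s, wt s ≠ some 0) (w : List Step) : 0 ∉ runs wt w := by
  induction w with
  | nil => simp [runs]
  | cons a w ih =>
    cases ha : wt a with
    | none => simpa [runs, ha] using ih
    | some n =>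
      have hn : n ≠ 0 := fun h => hpos a (h ▸ ha)
      obtain h | ⟨c, r, hw, h⟩ := runs_cons_of_some ha w
      · simp [h, ih, hn.symm]
      · rw [hw, List.mem_cons] at ih
        rw [h, List.mem_cons]
        grind

theorem runs_replicate_succ {s : Step} {n : ℕ} (hs : wt s = some n) (p : ℕ) :
    runs wt (List.replicate (p + 1) s) = [(p + 1) * n] := by
  induction p with
  | zero => simpa using runs_singleton hs
  | succ p ih =>
    rw [List.replicate_succ] at ih
    rw [List.replicate_succ, List.replicate_succ, runs_cons_cons_of_some hs hs ih]
    congr 1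
    ring

end Runs

theorem sum_uRuns (w : List Step) : (uRuns w).sum = w.count Step.u := by
  rw [uRuns, sum_runs]
  induction w with
  | nil => rfl
  | cons a w ih => cases a <;> simp [ih, add_comm]

theorem mem_Icc_of_mem_uRuns {i : ℕ} {w : List Step} (hi : i ∈ uRuns w) :
    i ∈ Icc 1 (w.count Step.u) := by
  have hpos : i ≠ 0 := by
    rintro rfl
    exact zero_notMem_runs (by rintro (_ | _ | _) <;> simp) w hi
  exact mem_Icc.2 ⟨Nat.one_le_iff_ne_zero.2 hpos, sum_uRuns w ▸ List.single_le_sum (by simp) i hi⟩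

section SegmentWeight

variable {R : Type*} [CommMonoid R] (t : ℕ → R)

/-- The product of `t i` over the lengths `i` of the `u`-segments of a word; on all words with a
given number `m` of up-steps it is the weight `∏ i ∈ Icc 1 m, t i ^ alpha i w`. -/
def segmentWeight (w : List Step) : R := ((uRuns w).map t).prod

theorem prod_Icc_pow_alpha (w : List Step) :
    ∏ i ∈ Icc 1 (w.count Step.u), t i ^ alpha i w = segmentWeight t w := by
  rw [segmentWeight, prod_list_map_count]
  refine (prod_subset (fun i hi => mem_Icc_of_mem_uRuns (List.mem_toFinset.1 hi)) ?_).symm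
  intro i _ hi
  rw [alpha, List.count_eq_zero_of_not_mem (mt List.mem_toFinset.2 hi), pow_zero]

theorem segmentWeight_nil : segmentWeight t [] = 1 := rfl

theorem segmentWeight_append_cons {s : Step} (hs : s ≠ Step.u) (v w : List Step) :
    segmentWeight t (v ++ s :: w) = segmentWeight t v * segmentWeight t w := by
  rw [segmentWeight, uRuns, runs_append_cons_of_none (by cases s <;> simp_all), List.map_append,
    List.prod_append]
  rfl

theorem segmentWeight_replicate_succ (p : ℕ) :
    segmentWeight t (List.replicate (p + 1) Step.u) = t (p + 1) := by
  rw [segmentWeight, uRuns, runs_replicate_succ rfl]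
  simp

end SegmentWeight

section DescentSet

/-- The words with `m` up-steps and `j` horizontal steps that describe a path from height `l` to
height `0` staying weakly above the `x`-axis. -/
def descentSet (l m j : ℕ) : Set (List Step) :=
  {w | w.count Step.u = m ∧ w.count Step.d = m + l ∧ w.count Step.h = j ∧
    ∀ i : ℕ, (w.take i).count Step.d ≤ (w.take i).count Step.u + l}

variable {l m j : ℕ} {w : List Step}

theorem finite_descentSet (l m j : ℕ) : (descentSet l m j).Finite := by
  refine (List.finite_length_eq Step (2 * m + l + j)).subset ?_
  rintro w ⟨hu, hd, hh, -⟩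
  have hlength : w.length = w.count Step.u + w.count Step.d + w.count Step.h := by
    rw [← Multiset.coe_card, ← Multiset.sum_count_eq_card (s := univ) (by simp), Step.sum_univ]
    simp
  grind

theorem nil_mem_descentSet : [] ∈ descentSet l m j ↔ l = 0 ∧ m = 0 ∧ j = 0 := by
  simp only [descentSet, Set.mem_ofPred_eq, List.count_nil, List.take_nil]
  grind

theorem forall_count_take_cons_le_iff (l : ℕ) (s : Step) (w : List Step) :
    (∀ i, ((s :: w).take i).count Step.d ≤ ((s :: w).take i).count Step.u + l) ↔
      ∀ i, (s :: w.take i).count Step.d ≤ (s :: w.take i).count Step.u + l := by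
  rw [← Nat.and_forall_add_one]
  simp

theorem up_cons_mem_descentSet :
    Step.u :: w ∈ descentSet l (m + 1) j ↔ w ∈ descentSet (l + 1) m j := by
  simp only [descentSet, Set.mem_ofPred_eq, forall_count_take_cons_le_iff, List.count_cons]
  grind

theorem up_cons_notMem_descentSet_zero : Step.u :: w ∉ descentSet l 0 j := by
  simp [descentSet]

theorem down_cons_mem_descentSet :
    Step.d :: w ∈ descentSet (l + 1) m j ↔ w ∈ descentSet l m j := by
  simp only [descentSet, Set.mem_ofPred_eq, forall_count_take_cons_le_iff, List.count_cons]
  grind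

theorem down_cons_notMem_descentSet_zero : Step.d :: w ∉ descentSet 0 m j := by
  rintro ⟨-, -, -, h⟩
  simpa using h 1

theorem horizontal_cons_mem_descentSet :
    Step.h :: w ∈ descentSet l m (j + 1) ↔ w ∈ descentSet l m j := by
  simp [descentSet, forall_count_take_cons_le_iff]

theorem horizontal_cons_notMem_descentSet_zero : Step.h :: w ∉ descentSet l m 0 := by
  simp [descentSet]

end DescentSet

section DescentGF

open MvPowerSeries

variable {R : Type*} [CommSemiring R]

/-- The generating function of the descents from height `l` to height `0`, a word `w` having
weight `f w`; the variables `X 0` and `X 1` count up-steps and horizontal steps. -/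
noncomputable def descentGF (l : ℕ) (f : List Step → R) : MvPowerSeries (Fin 2) R :=
  fun e => ∑ᶠ w ∈ descentSet l (e 0) (e 1), f w

variable (l : ℕ) (f : List Step → R) (e : Fin 2 →₀ ℕ)

theorem coeff_descentGF :
    coeff e (descentGF l f) = ∑ᶠ w ∈ descentSet l (e 0) (e 1), f w := rfl

theorem coeff_X_zero_mul_descentGF :
    coeff e (X 0 * descentGF (l + 1) f) =
      ∑ᶠ w ∈ List.cons Step.u ⁻¹' descentSet l (e 0) (e 1), f w := by
  rw [mvPowerSeries_coeff_X_mul]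
  cases he : e 0 with
  | zero => simp [up_cons_notMem_descentSet_zero]
  | succ m => simp [coeff_descentGF, up_cons_mem_descentSet, he]

theorem coeff_X_one_mul_descentGF :
    coeff e (X 1 * descentGF l f) =
      ∑ᶠ w ∈ List.cons Step.h ⁻¹' descentSet l (e 0) (e 1), f w := by
  rw [mvPowerSeries_coeff_X_mul]
  cases he : e 1 with
  | zero => simp [horizontal_cons_notMem_descentSet_zero]
  | succ j => simp [coeff_descentGF, horizontal_cons_mem_descentSet, he]

theorem descentGF_zero :
    descentGF 0 f = C (f []) + X 1 * descentGF 0 (fun w => f (Step.h :: w))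
      + X 0 * descentGF 1 (fun w => f (Step.u :: w)) := by
  ext e
  have hnil : ∑ᶠ w ∈ descentSet 0 (e 0) (e 1) ∩ {[]}, f w = coeff e (C (f [])) := by
    have he : e = 0 ↔ e 0 = 0 ∧ e 1 = 0 := by simp [Finsupp.ext_iff, Fin.forall_fin_two]
    rw [coeff_C]
    split_ifs with h
    · rw [Set.inter_eq_right.2 (by simpa [nil_mem_descentSet] using he.1 h), finsum_mem_singleton]
    · rw [Set.inter_singleton_eq_empty.2 (by simpa [nil_mem_descentSet] using mt he.2 h),
        finsum_mem_empty]
  have hdown : List.cons Step.d ⁻¹' descentSet 0 (e 0) (e 1) = ∅ :=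
    Set.eq_empty_of_forall_notMem fun _ => down_cons_notMem_descentSet_zero
  rw [map_add, map_add, coeff_X_zero_mul_descentGF, coeff_X_one_mul_descentGF, coeff_descentGF,
    finsum_mem_list_eq_nil_add_sum_cons (finite_descentSet _ _ _), Step.sum_univ, hnil, hdown,
    finsum_mem_empty]
  ring

theorem descentGF_succ :
    descentGF (l + 1) f = descentGF l (fun w => f (Step.d :: w))
      + X 1 * descentGF (l + 1) (fun w => f (Step.h :: w))
      + X 0 * descentGF (l + 2) (fun w => f (Step.u :: w)) := by
  ext e
  have hnil : descentSet (l + 1) (e 0) (e 1) ∩ {[]} = ∅ := by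
    simp [nil_mem_descentSet]
  have hdown : List.cons Step.d ⁻¹' descentSet (l + 1) (e 0) (e 1) = descentSet l (e 0) (e 1) :=
    Set.ext fun _ => down_cons_mem_descentSet
  rw [map_add, map_add, coeff_X_zero_mul_descentGF, coeff_X_one_mul_descentGF, coeff_descentGF,
    finsum_mem_list_eq_nil_add_sum_cons (finite_descentSet _ _ _), Step.sum_univ, hnil, hdown,
    finsum_mem_empty, coeff_descentGF]
  ring

theorem descentGF_const_mul (a : R) : descentGF l (fun w => a * f w) = C a * descentGF l f := by
  ext e
  rw [coeff_C_mul, coeff_descentGF, coeff_descentGF, mul_finsum_mem' _ _ (finite_descentSet _ _ _)]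

variable {f} {g h : List Step → R}

theorem descentGF_mul (hf : ∀ v w, f (v ++ Step.d :: w) = g v * h w) (l k : ℕ) :
    descentGF (l + k + 1) f = descentGF l g * descentGF k h := by
  ext e
  induction hn : 2 * e 0 + e 1 + l using Nat.strong_induction_on generalizing l f g e with
  | _ n ih =>
    subst hn
    have hup : coeff e (X 0 * descentGF (l + k + 2) fun w => f (Step.u :: w)) =
        coeff e (X 0 * (descentGF (l + 1) (fun w => g (Step.u :: w)) * descentGF k h)) := by
      refine coeff_X_mul_congr fun he => ?_
      rw [show l + k + 2 = l + 1 + k + 1 by ring]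
      exact ih _ (by simp; lia) (fun v w => hf (Step.u :: v) w) _ _ rfl
    have hhorizontal : coeff e (X 1 * descentGF (l + k + 1) fun w => f (Step.h :: w)) =
        coeff e (X 1 * (descentGF l (fun w => g (Step.h :: w)) * descentGF k h)) :=
      coeff_X_mul_congr fun he =>
        ih _ (by simp; lia) (fun v w => hf (Step.h :: v) w) _ _ rfl
    cases l with
    | zero =>
      have hdown : descentGF k (fun w => f (Step.d :: w)) = C (g []) * descentGF k h := by
        rw [← descentGF_const_mul]
        exact congrArg _ (funext (hf []))
      rw [zero_add] at hup hhorizontal ⊢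
      rw [descentGF_succ, descentGF_zero g, hdown, add_mul, add_mul, mul_assoc, mul_assoc]
      simp only [map_add, hup, hhorizontal]
    | succ l =>
      have hdown : coeff e (descentGF (l + 1 + k) fun w => f (Step.d :: w)) =
          coeff e (descentGF l (fun w => g (Step.d :: w)) * descentGF k h) := by
        rw [show l + 1 + k = l + k + 1 by ring]
        exact ih _ (by lia) (fun v w => hf (Step.d :: v) w) _ _ rfl
      rw [descentGF_succ, descentGF_succ l g, add_mul, add_mul, mul_assoc, mul_assoc]
      simp only [map_add, hup, hhorizontal, hdown]

end DescentGF

section PathSeries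

open MvPowerSeries

variable {R : Type*} [CommSemiring R] (t : ℕ → R)

/-- The path generating function `pathGF`, with weights in an arbitrary commutative semiring. -/
noncomputable def pathSeries : MvPowerSeries (Fin 2) R :=
  fun e => ∑ᶠ w ∈ pathSet (e 0) (e 1), ∏ i ∈ Icc 1 (e 0), t i ^ alpha i w

theorem pathSeries_eq_descentGF : pathSeries t = descentGF 0 (segmentWeight t) := by
  funext e
  refine finsum_mem_congr rfl fun w hw => ?_
  rw [← hw.1, prod_Icc_pow_alpha]

theorem descentGF_segmentWeight (l : ℕ) :
    descentGF l (segmentWeight t) = pathSeries t ^ (l + 1) := by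
  induction l with
  | zero => rw [pathSeries_eq_descentGF, zero_add, pow_one]
  | succ l ih =>
    rw [pow_succ, ← ih, pathSeries_eq_descentGF]
    exact descentGF_mul (segmentWeight_append_cons t (by simp)) l 0

/-- The generating function of the paths that begin with at least `p` up-steps, divided by `x ^ p`:
the initial up-steps contribute to the weight of a path, but are not counted by `X 0`. -/
noncomputable def ascentGF (p : ℕ) : MvPowerSeries (Fin 2) R :=
  descentGF p fun w => segmentWeight t (List.replicate p Step.u ++ w)

theorem descentGF_segmentWeight_replicate_up_cons (p l : ℕ) :
    descentGF l (fun w => segmentWeight t (List.replicate p Step.u ++ Step.u :: w)) =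
      descentGF l (fun w => segmentWeight t (List.replicate (p + 1) Step.u ++ w)) := by
  simp only [List.replicate_succ', List.append_assoc, List.singleton_append]

theorem descentGF_segmentWeight_replicate_cons {s : Step} (hs : s ≠ Step.u) (p l : ℕ) :
    descentGF l (fun w => segmentWeight t (List.replicate (p + 1) Step.u ++ s :: w)) =
      C (t (p + 1)) * pathSeries t ^ (l + 1) := by
  simp only [segmentWeight_append_cons t hs, segmentWeight_replicate_succ, descentGF_const_mul,
    descentGF_segmentWeight]

theorem pathSeries_eq_one_add_ascentGF :
    pathSeries t = 1 + X 1 * pathSeries t + X 0 * ascentGF t 1 := by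
  have hhorizontal : (fun w => segmentWeight t (Step.h :: w)) = segmentWeight t :=
    funext fun w => (segmentWeight_append_cons t (by simp) [] w).trans (one_mul _)
  conv_lhs => rw [pathSeries_eq_descentGF, descentGF_zero, hhorizontal, ← pathSeries_eq_descentGF,
    segmentWeight_nil, map_one]
  rfl

theorem ascentGF_succ (p : ℕ) :
    ascentGF t (p + 1) = C (t (p + 1)) * pathSeries t ^ (p + 1)
      + X 1 * (C (t (p + 1)) * pathSeries t ^ (p + 2)) + X 0 * ascentGF t (p + 2) := by
  rw [ascentGF, descentGF_succ, descentGF_segmentWeight_replicate_cons t (by simp),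
    descentGF_segmentWeight_replicate_cons t (by simp),
    descentGF_segmentWeight_replicate_up_cons]
  rfl

theorem pathSeries_eq_add_X_pow_mul_ascentGF (m : ℕ) :
    pathSeries t = 1 + X 1 * pathSeries t
      + (∑ p ∈ Icc 1 m, C (t p) * X 0 ^ p * pathSeries t ^ p)
      + X 1 * (∑ p ∈ Icc 1 m, C (t p) * X 0 ^ p * pathSeries t ^ (p + 1))
      + X 0 ^ (m + 1) * ascentGF t (m + 1) := by
  induction m with
  | zero => simpa using pathSeries_eq_one_add_ascentGF t
  | succ m ih =>
    rw [ascentGF_succ] at ih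
    rw [sum_Icc_succ_top (by lia), sum_Icc_succ_top (by lia)]
    refine ih.trans ?_
    ring

theorem stmt0_general (m j : ℕ) :
    coeff (Finsupp.single 0 m + Finsupp.single 1 j) (pathSeries t) =
      coeff (Finsupp.single 0 m + Finsupp.single 1 j)
        (1 + X 1 * pathSeries t
          + (∑ p ∈ Icc 1 m, C (t p) * X 0 ^ p * pathSeries t ^ p)
          + X 1 * ∑ p ∈ Icc 1 m, C (t p) * X 0 ^ p * pathSeries t ^ (p + 1)) := by
  have hremainder : coeff (Finsupp.single 0 m + Finsupp.single 1 j)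
      (X 0 ^ (m + 1) * ascentGF t (m + 1)) = 0 :=
    X_pow_dvd_iff.1 (dvd_mul_right _ _) _ (by simp)
  conv_lhs => rw [pathSeries_eq_add_X_pow_mul_ascentGF t m, map_add, hremainder, add_zero]

end PathSeries

/-- The functional equation P = 1 + zP + ∑_{p≥1} t_p x^p P^p + z ∑_{p≥1} t_p x^p P^{p+1},
stated coefficientwise: for the coefficient of x^m z^j only the summands with p ≤ m
contribute, so the infinite series may be truncated at p = m. -/
theorem stmt0 (t : ℕ → ℚ) (m j : ℕ) :
    MvPowerSeries.coeff (R := ℚ) (Finsupp.single (0 : Fin 2) m + Finsupp.single (1 : Fin 2) j)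
        (pathGF t) =
    MvPowerSeries.coeff (R := ℚ) (Finsupp.single (0 : Fin 2) m + Finsupp.single (1 : Fin 2) j)
      (1 + MvPowerSeries.X 1 * pathGF t
        + (∑ p ∈ Finset.Icc 1 m,
            MvPowerSeries.C (σ := Fin 2) (R := ℚ) (t p) * MvPowerSeries.X 0 ^ p * pathGF t ^ p)
        + MvPowerSeries.X 1 * ∑ p ∈ Finset.Icc 1 m,
            MvPowerSeries.C (σ := Fin 2) (R := ℚ) (t p) * MvPowerSeries.X 0 ^ p * pathGF t ^ (p + 1)) :=
  stmt0_general t m j
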